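/- arXiv:2111.05945 — 3 statements merged into one kernel-verified Lean document; each statement's English description precedes it below -/
import Mathlib

section
/- Let 0 < γ < 1 and c > 0 be real numbers, and let h : [0, ∞) → ℝ be continuously differentiable with h(t) > 0 and h'(t) ≤ −c · h(t)^{2/(1+γ)} for all t ≥ 0. Then ∫_0^∞ √(−h'(t)) dt < ∞. -/
open MeasureTheory

/-- The derivative of a function that is monotone and bounded above on `[a, ∞)` is integrable. -/
lemma integrableOn_Ioi_deriv_of_nonneg_of_le {g g' : ℝ → ℝ} {a B : ℝ}
    (hderiv : ∀ t, a ≤ t → HasDerivWithinAt g (g' t) (Set.Ici a) t)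
    (hg' : ∀ t, a ≤ t → 0 ≤ g' t) (hB : ∀ t, a ≤ t → g t ≤ B) :
    IntegrableOn g' (Set.Ioi a) := by
  have hd : ∀ t ∈ Set.Ioi a, HasDerivAt g (g' t) t := fun t ht =>
    (hderiv t (le_of_lt ht)).hasDerivAt (Ici_mem_nhds ht)
  have hmono : MonotoneOn g (Set.Ici a) := by
    refine monotoneOn_of_deriv_nonneg (convex_Ici a)
      (fun t ht => (hderiv t ht).continuousWithinAt) ?_ ?_ <;> rw [interior_Ici]
    · exact fun t ht => (hd t ht).differentiableAt.differentiableWithinAt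
    · intro t ht
      rw [(hd t ht).deriv]
      exact hg' t (le_of_lt ht)
  have hmono' : Monotone fun t => g (max a t) := fun s t hst =>
    hmono (Set.mem_Ici.2 (le_max_left _ _)) (Set.mem_Ici.2 (le_max_left _ _)) (max_le_max_left a hst)
  have hbdd : BddAbove (Set.range fun t => g (max a t)) :=
    ⟨B, by rintro _ ⟨t, rfl⟩; exact hB _ (le_max_left _ _)⟩
  have hlim := tendsto_atTop_ciSup hmono' hbdd
  refine integrableOn_Ioi_deriv_of_nonneg (hderiv a le_rfl).continuousWithinAt hd
    (fun t ht => hg' t (le_of_lt ht)) (hlim.congr' ?_)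
  filter_upwards [Filter.eventually_ge_atTop a] with t ht
  rw [max_eq_right ht]

/-- If `c x ^ (2 q) ≤ y` then `√y ≤ y x ^ (-q) / √c`. -/
lemma sqrt_le_div_sqrt_mul_rpow {c x y q : ℝ} (hc : 0 < c) (hx : 0 < x)
    (hxy : c * x ^ (2 * q) ≤ y) : √y ≤ y * x ^ (-q) / √c := by
  have hxq : 0 < x ^ q := Real.rpow_pos_of_pos hx q
  have hle : √c * x ^ q ≤ √y := by
    refine Real.le_sqrt_of_sq_le (le_trans (le_of_eq ?_) hxy)
    rw [mul_pow, Real.sq_sqrt hc.le, mul_comm 2 q, Real.rpow_mul hx.le, Real.rpow_two]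
  have hy : 0 ≤ y := le_trans (by positivity) hxy
  rw [Real.rpow_neg hx.le, ← div_eq_mul_inv, div_div, le_div_iff₀ (by positivity)]
  calc √y * (x ^ q * √c) = √y * (√c * x ^ q) := by ring
    _ ≤ √y * √y := by gcongr
    _ = y := Real.mul_self_sqrt hy

/-- Abstract form of Proposition 3.5: if `h > 0` on `[0,∞)` is continuously
differentiable with `h' ≤ -c · h^(2/(1+γ))`, then `∫_0^∞ √(-h') < ∞`. -/
theorem stmt3 (γ c : ℝ) (hγ0 : 0 < γ) (hγ1 : γ < 1) (hc : 0 < c)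
    (h h' : ℝ → ℝ)
    (hderiv : ∀ t : ℝ, 0 ≤ t → HasDerivWithinAt h (h' t) (Set.Ici 0) t)
    (hcont : ContinuousOn h' (Set.Ici 0))
    (hpos : ∀ t : ℝ, 0 ≤ t → 0 < h t)
    (hineq : ∀ t : ℝ, 0 ≤ t → h' t ≤ -c * h t ^ (2 / (1 + γ))) :
    ∫⁻ t in Set.Ici (0 : ℝ), ENNReal.ofReal (Real.sqrt (-h' t)) < ⊤ := by
  set p : ℝ := γ / (1 + γ) with hp
  have hp0 : 0 < p := by positivity
  have hexp : 2 / (1 + γ) = 2 * (1 - p) := by rw [hp]; field_simp; ring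
  set g' : ℝ → ℝ := fun t => -h' t * h t ^ (-(1 - p)) / √c
  have hle : ∀ t, 0 ≤ t → √(-h' t) ≤ g' t := fun t ht =>
    sqrt_le_div_sqrt_mul_rpow hc (hpos t ht) (by rw [← hexp]; linarith [hineq t ht])
  have hg : ∀ t, 0 ≤ t →
      HasDerivWithinAt (fun s => -(h s ^ p / (p * √c))) (g' t) (Set.Ici 0) t := by
    intro t ht
    have hsc : √c ≠ 0 := (Real.sqrt_pos.2 hc).ne'
    refine (((hderiv t ht).rpow_const (p := p)
      (Or.inl (hpos t ht).ne')).div_const (p * √c)).neg.congr_deriv ?_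
    simp only [g', neg_sub]
    field_simp
  have hint : IntegrableOn g' (Set.Ioi 0) :=
    integrableOn_Ioi_deriv_of_nonneg_of_le (B := 0) hg
      (fun t ht => (Real.sqrt_nonneg _).trans (hle t ht)) fun t ht => by
        have := hpos t ht
        exact neg_nonpos.2 (by positivity)
  rw [← integrableOn_Ici_iff_integrableOn_Ioi] at hint
  refine lt_of_le_of_lt (setLIntegral_mono' measurableSet_Ici fun t ht =>
    ENNReal.ofReal_le_ofReal (hle t ht)) hint.lintegral_lt_top
end

section
/- Let (X, d) be a proper metric space (every closed ball is compact), let w : X → [0, ∞) be continuous, let x ∈ X, and let r > 0 and θ > 0 be real numbers. Then there exist r₀ ∈ [0, r) and a point x₀ in the closed ball B̄(x, r₀) such that: (i) w(x₀) = max_{B̄(x, r₀)} w; (ii) (r − s)^θ · max_{B̄(x, s)} w ≤ (r − r₀)^θ · w(x₀) for every s ∈ [0, r); and (iii) sup_{B̄(x₀, (r−r₀)/2)} w ≤ 2^θ · w(x₀). -/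
open Metric in
/-- A nonnegative continuous function weighted by a positive power of `r - dist y x` attains its
maximum over the ball of radius `r` at an interior point. -/
theorem exists_dist_lt_forall_rpow_mul_le {X : Type*} [PseudoMetricSpace X] [ProperSpace X]
    {w : X → ℝ} (hw : Continuous w) (hw0 : ∀ y, 0 ≤ w y) (x : X) {r θ : ℝ}
    (hr : 0 < r) (hθ : 0 < θ) :
    ∃ z, dist z x < r ∧ ∀ y, dist y x ≤ r →
      (r - dist y x) ^ θ * w y ≤ (r - dist z x) ^ θ * w z := by
  have hcont : Continuous fun y => (r - dist y x) ^ θ * w y :=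
    ((continuous_const.sub (continuous_id.dist continuous_const)).rpow_const
      fun _ => Or.inr hθ.le).mul hw
  obtain ⟨z, hz, hmax⟩ := (isCompact_closedBall x r).exists_isMaxOn
    ⟨x, mem_closedBall_self hr.le⟩ hcont.continuousOn
  rcases (mem_closedBall.1 hz).lt_or_eq with h | h
  · exact ⟨z, h, fun y hy => hmax (mem_closedBall.2 hy)⟩
  · refine ⟨x, by simpa using hr, fun y hy => ?_⟩
    have hy' : (r - dist y x) ^ θ * w y ≤ (r - dist z x) ^ θ * w z :=
      hmax (mem_closedBall.2 hy)
    rw [h, sub_self, Real.zero_rpow hθ.ne', zero_mul] at hy'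
    exact hy'.trans (mul_nonneg (Real.rpow_nonneg (by simpa using hr.le) _) (hw0 x))

/-- Point-picking argument from the proof of Lemma 3.8: on a proper metric space,
for continuous `w ≥ 0`, `x ∈ X`, `r > 0`, `θ > 0`, there are `r₀ ∈ [0, r)` and
`x₀ ∈ B̄(x, r₀)` with (i) `w x₀ = max_{B̄(x,r₀)} w`,
(ii) `(r - s)^θ · max_{B̄(x,s)} w ≤ (r - r₀)^θ · w x₀` for all `s ∈ [0, r)`, and
(iii) `sup_{B̄(x₀, (r-r₀)/2)} w ≤ 2^θ · w x₀`. -/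
theorem stmt9 {X : Type*} [MetricSpace X] [ProperSpace X]
    (w : X → ℝ) (hw_cont : Continuous w) (hw_nonneg : ∀ y : X, 0 ≤ w y)
    (x : X) (r θ : ℝ) (hr : 0 < r) (hθ : 0 < θ) :
    ∃ r₀ : ℝ, 0 ≤ r₀ ∧ r₀ < r ∧ ∃ x₀ ∈ Metric.closedBall x r₀,
      (∀ y ∈ Metric.closedBall x r₀, w y ≤ w x₀) ∧
      (∀ s : ℝ, 0 ≤ s → s < r →
        (r - s) ^ θ * sSup (w '' Metric.closedBall x s) ≤ (r - r₀) ^ θ * w x₀) ∧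
      (∀ y ∈ Metric.closedBall x₀ ((r - r₀) / 2), w y ≤ 2 ^ θ * w x₀) := by
  obtain ⟨x₀, hx₀, hmax⟩ := exists_dist_lt_forall_rpow_mul_le hw_cont hw_nonneg x hr hθ
  have key : ∀ s, s < r → ∀ y ∈ Metric.closedBall x s,
      (r - s) ^ θ * w y ≤ (r - dist x₀ x) ^ θ * w x₀ := by
    intro s hs y hy
    rw [Metric.mem_closedBall] at hy
    refine (mul_le_mul_of_nonneg_right ?_ (hw_nonneg y)).trans (hmax y (hy.trans hs.le))
    exact Real.rpow_le_rpow (by linarith) (by linarith) hθ.le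
  have hpos : 0 < (r - dist x₀ x) ^ θ := Real.rpow_pos_of_pos (by linarith) θ
  refine ⟨dist x₀ x, dist_nonneg, hx₀, x₀, Metric.mem_closedBall.2 le_rfl, ?_, ?_, ?_⟩
  · exact fun y hy => le_of_mul_le_mul_left (key _ hx₀ y hy) hpos
  · intro s hs0 hs
    obtain ⟨y, hy, hsup⟩ := (isCompact_closedBall x s).exists_sSup_image_eq
      ⟨x, Metric.mem_closedBall_self hs0⟩ hw_cont.continuousOn
    rw [hsup]
    exact key s hs y hy
  · intro y hy
    rw [Metric.mem_closedBall] at hy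
    have h := key ((r + dist x₀ x) / 2) (by linarith) y
      (Metric.mem_closedBall.2 (by linarith [dist_triangle y x₀ x]))
    rw [show r - (r + dist x₀ x) / 2 = (r - dist x₀ x) / 2 by ring,
      Real.div_rpow (by linarith) zero_le_two, div_mul_eq_mul_div,
      div_le_iff₀ (Real.rpow_pos_of_pos two_pos θ), mul_assoc] at h
    rw [mul_comm]
    exact le_of_mul_le_mul_left h hpos
end

section
/- Let C > 0 and δ > 0 be real numbers, and let F : [0, ∞) → [0, ∞) be continuously differentiable with ∫_0^∞ F(t) dt < ∞ and F'(t) ≤ C·(F(t)^{1+δ} + F(t)) for all t ≥ 0. Then F(t) → 0 as t → ∞. -/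
open MeasureTheory

/-- A function bounded below by a positive constant near infinity is not integrable, so an
integrable function takes values below any positive level arbitrarily late. -/
lemma exists_ge_lt_of_integrableOn_Ici {F : ℝ → ℝ} {a T : ℝ} (ha : 0 < a)
    (hF : IntegrableOn F (Set.Ici T)) : ∃ t, T ≤ t ∧ F t < a := by
  by_contra! h
  have hconst : IntegrableOn (fun _ : ℝ => a) (Set.Ici T) := by
    refine Integrable.mono' hF aestronglyMeasurable_const ?_
    filter_upwards [ae_restrict_mem measurableSet_Ici] with t ht
    rw [Real.norm_of_nonneg ha.le]
    exact h t ht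
  rw [integrableOn_const_iff] at hconst
  simp [ha.ne'] at hconst

/-- Abstract form of Proposition 3.1: if `F ≥ 0` on `[0,∞)` is continuously
differentiable with `∫_0^∞ F < ∞` and `F' ≤ C(F^(1+δ) + F)`, then `F(t) → 0`
as `t → ∞`. -/
theorem stmt10 (C δ : ℝ) (hC : 0 < C) (hδ : 0 < δ)
    (F F' : ℝ → ℝ)
    (hF_nonneg : ∀ t : ℝ, 0 ≤ t → 0 ≤ F t)
    (hderiv : ∀ t : ℝ, 0 ≤ t → HasDerivWithinAt F (F' t) (Set.Ici 0) t)
    (hcont : ContinuousOn F' (Set.Ici 0))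
    (hint : IntegrableOn F (Set.Ici 0))
    (hineq : ∀ t : ℝ, 0 ≤ t → F' t ≤ C * (F t ^ (1 + δ) + F t)) :
    Filter.Tendsto F Filter.atTop (nhds 0) := by
  have hFc : ContinuousOn F (Set.Ici 0) := fun t ht => (hderiv t ht).continuousWithinAt
  -- Extend `F` continuously to the line, so that its primitive is differentiable everywhere.
  have hext : Continuous fun t => F (max 0 t) :=
    hFc.comp_continuous (by fun_prop) fun t => le_max_left 0 t
  have hext_int : IntegrableOn (fun t => F (max 0 t)) (Set.Ioi 0) :=
    (hint.mono_set Set.Ioi_subset_Ici_self).congr_fun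
      (fun t ht => by simp [max_eq_right (Set.mem_Ioi.1 ht).le]) measurableSet_Ioi
  set G : ℝ → ℝ := fun t => ∫ s in (0 : ℝ)..t, F (max 0 s)
  have hGderiv : ∀ t, 0 ≤ t → HasDerivAt G (F t) t := fun t ht => by
    simpa [max_eq_right ht] using (hext.integral_hasStrictDerivAt 0 t).hasDerivAt
  have hGlim : Filter.Tendsto G Filter.atTop (nhds (∫ s in Set.Ioi 0, F (max 0 s))) :=
    intervalIntegral_tendsto_integral_Ioi 0 hext_int Filter.tendsto_id
  rw [Metric.tendsto_atTop] at hGlim ⊢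
  intro e he
  obtain ⟨ε, hε, hεe, hε1⟩ : ∃ ε : ℝ, 0 < ε ∧ ε ≤ e ∧ ε ≤ 1 :=
    ⟨min e 1, lt_min he one_pos, min_le_left _ _, min_le_right _ _⟩
  obtain ⟨N, hN⟩ := hGlim (ε / (12 * C)) (by positivity)
  obtain ⟨t₀, ht₀, hFt₀⟩ := exists_ge_lt_of_integrableOn_Ici (half_pos hε)
    (hint.mono_set (Set.Ici_subset_Ici.2 (le_max_right N 0)))
  have ht₀N : N ≤ t₀ := (le_max_left _ _).trans ht₀
  have ht₀0 : 0 ≤ t₀ := (le_max_right _ _).trans ht₀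
  have htail : ∀ t, t₀ ≤ t → 3 * C * (G t - G t₀) < ε / 2 := by
    intro t ht
    have h₁ := abs_lt.1 (hN t (ht₀N.trans ht))
    have h₂ := abs_lt.1 (hN t₀ ht₀N)
    have h : G t - G t₀ < 2 * (ε / (12 * C)) := by linarith [h₁.2, h₂.1]
    calc 3 * C * (G t - G t₀) < 3 * C * (2 * (ε / (12 * C))) := by gcongr
      _ = ε / 2 := by field_simp; norm_num
  have hGmono : MonotoneOn G (Set.Ici 0) := by
    refine monotoneOn_of_hasDerivWithinAt_nonneg (f' := F) (convex_Ici 0)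
      (fun t ht => (hGderiv t ht).continuousAt.continuousWithinAt)
      (fun t ht => (hGderiv t (interior_subset ht)).hasDerivWithinAt)
      (fun t ht => hF_nonneg t (interior_subset ht))
  refine ⟨t₀, fun t ht => ?_⟩
  -- The barrier `ε / 2 + 3C ∫ F` has slope `3CF`, whereas `F' ≤ 2CF` as long as `F ≤ 1`.
  have hle : F t ≤ ε / 2 + 3 * C * (G t - G t₀) := by
    refine image_le_of_deriv_right_lt_deriv_boundary' (a := t₀) (b := t) (f' := F')
      (B := fun s => ε / 2 + 3 * C * (G s - G t₀)) (B' := fun s => 3 * C * F s)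
      (hFc.mono fun s hs => ht₀0.trans hs.1)
      (fun s hs => (hderiv s (ht₀0.trans hs.1)).mono
        (Set.Ici_subset_Ici.2 (ht₀0.trans hs.1)))
      (by simpa using hFt₀.le) ?_ ?_ ?_ (Set.right_mem_Icc.2 ht)
    · intro s hs
      have := (hGderiv s (ht₀0.trans hs.1)).continuousAt
      exact ContinuousAt.continuousWithinAt (by fun_prop)
    · intro s hs
      exact ((((hGderiv s (ht₀0.trans hs.1)).sub_const _).const_mul _).const_add _).hasDerivWithinAt
    · intro s hs heq
      have hs0 : 0 ≤ s := ht₀0.trans hs.1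
      have hmono : 0 ≤ 3 * C * (G s - G t₀) :=
        mul_nonneg (by positivity) (sub_nonneg.2 (hGmono ht₀0 hs0 hs.1))
      have hlt := htail s hs.1
      have hpos : 0 < F s := by linarith
      have hpow : F s ^ (1 + δ) ≤ F s := by
        simpa using Real.rpow_le_rpow_of_exponent_ge hpos (by linarith : F s ≤ 1)
          (by linarith : (1 : ℝ) ≤ 1 + δ)
      calc F' s ≤ C * (F s ^ (1 + δ) + F s) := hineq s hs0
        _ ≤ C * (F s + F s) := by gcongr
        _ < 3 * C * F s := by nlinarith [mul_pos hC hpos]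
  rw [Real.dist_0_eq_abs, abs_of_nonneg (hF_nonneg t (ht₀0.trans ht))]
  linarith [htail t ht]
end
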